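/- arXiv:math/0602568 — 2 statements merged into one kernel-verified Lean document; each statement's English description precedes it below -/
import Mathlib

section
/- Let n > 1 and let α = (a_1,...,a_ℓ) be a zero-free sequence in Z/nZ of length ℓ > n/2. Then there exists an integer g coprime to n such that the sum of the least positive representatives of g·a_1, ..., g·a_ℓ is less than n; i.e., Index(α) < n. -/
/-- A list in an additive commutative group is zero-free if no nonempty
sublist sums to zero. -/
def ZeroFree {G : Type*} [AddCommGroup G] (l : List G) : Prop :=
  ∀ t : List G, t.Sublist l → t ≠ [] → t.sum ≠ 0

/-- The least positive representative of a residue class mod n: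
the unique integer in {1, ..., n} congruent to it. -/
def lpr (n : ℕ) (a : ZMod n) : ℕ := if a = 0 then n else a.val

/-!
The proof follows Savchev and Chen. Call a multiset of natural numbers behaving if its subset sums
fill the whole interval from `0` to its total. In a finite abelian group `G`, every zero-sum free
multiset `α` with `|G| < 2 |α|` consists of multiples of one element `a` whose coefficients form a
behaving multiset `m`. Zero-sum freeness forces the total of `m` to be less than the order of `a`,
so for `G = ℤ/n` this order exceeds `n / 2`; hence `a` is a generator, and multiplying by its
inverse turns `α` into `m`.

To find `a`, take a behaving `β < α`. Since `|Σ(α)| ≤ |G| < 2 |α|`, there is a minimal nonempty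
extension `β + γ ≤ α` with `|Σ(β + γ)| < 2 |β + γ|`. If `γ` is a single term then `β + γ` is
behaving along the same element. Otherwise, by minimality, removing any term of `γ` loses just one
subset sum. Two such terms must coincide, so `γ` is a repeated element `g`, and `β` together with
all but one of these copies is behaving along `g`. Hence a maximal behaving `β` is all of `α`.
-/

section SubsetSums

open scoped Pointwise

variable {M : Type*} [AddCommMonoid M]

/-- The set `Σ(s)` of sums of sub-multisets of `s`, the empty sub-multiset included. -/
def subsetSums [DecidableEq M] (s : Multiset M) : Finset M :=
  (s.powerset.map Multiset.sum).toFinset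

/-- Zero-freeness for multisets: no nonempty sub-multiset sums to zero. -/
def IsZeroSumFree (s : Multiset M) : Prop :=
  ∀ t ≤ s, t ≠ 0 → t.sum ≠ 0

theorem IsZeroSumFree.mono {s t : Multiset M} (ht : IsZeroSumFree t) (hst : s ≤ t) :
    IsZeroSumFree s :=
  fun u hu => ht u (hu.trans hst)

theorem IsZeroSumFree.ne_zero_of_mem {s : Multiset M} {x : M} (hs : IsZeroSumFree s) (hx : x ∈ s) :
    x ≠ 0 := by
  simpa using hs {x} (Multiset.singleton_le.2 hx) (Multiset.singleton_ne_zero x)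

variable [DecidableEq M] {s t : Multiset M} {x y g : M}

theorem mem_subsetSums : x ∈ subsetSums s ↔ ∃ t ≤ s, t.sum = x := by
  simp [subsetSums]

theorem sum_mem_subsetSums (s : Multiset M) : s.sum ∈ subsetSums s :=
  mem_subsetSums.2 ⟨s, le_rfl, rfl⟩

theorem mem_subsetSums_of_mem (hx : x ∈ s) : x ∈ subsetSums s :=
  mem_subsetSums.2 ⟨{x}, Multiset.singleton_le.2 hx, Multiset.sum_singleton x⟩

theorem subsetSums_mono (h : s ≤ t) : subsetSums s ⊆ subsetSums t := fun _ hx =>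
  let ⟨u, hu, hux⟩ := mem_subsetSums.1 hx
  mem_subsetSums.2 ⟨u, hu.trans h, hux⟩

theorem subsetSums_zero : subsetSums (0 : Multiset M) = 0 := rfl

theorem subsetSums_cons (g : M) (s : Multiset M) :
    subsetSums (g ::ₘ s) = subsetSums s ∪ (g +ᵥ subsetSums s) := by
  ext x
  simp [subsetSums, Finset.mem_vadd_finset]

theorem add_mem_subsetSums_of_mem_erase (hg : g ∈ s) (hy : y ∈ subsetSums (s.erase g)) :
    g + y ∈ subsetSums s := by
  rw [← Multiset.cons_erase hg, subsetSums_cons]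
  exact Finset.mem_union_right _ (Finset.vadd_mem_vadd_finset hy)

theorem subsetSums_add (s t : Multiset M) : subsetSums (s + t) = subsetSums s + subsetSums t := by
  induction s using Multiset.induction_on with
  | empty => rw [zero_add, subsetSums_zero, zero_add]
  | cons g s ih =>
    rw [Multiset.cons_add, subsetSums_cons, subsetSums_cons, ih, Finset.union_add,
      ← Finset.singleton_vadd, ← Finset.singleton_vadd, vadd_eq_add, vadd_eq_add, add_assoc]

theorem subsetSums_map {N : Type*} [AddCommMonoid N] [DecidableEq N] (f : M →+ N)
    (s : Multiset M) : subsetSums (s.map f) = (subsetSums s).image f := by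
  induction s using Multiset.induction_on with
  | empty => simp [subsetSums]
  | cons g s ih =>
    rw [Multiset.map_cons, subsetSums_cons, subsetSums_cons, ih, Finset.image_union]
    congr 1
    ext x
    simp [Finset.mem_vadd_finset]

end SubsetSums

section ZeroSumFree

variable {G : Type*} [AddCommGroup G] [DecidableEq G] {s : Multiset G} {x y g h : G}

theorem sum_sub_mem_subsetSums (hx : x ∈ subsetSums s) : s.sum - x ∈ subsetSums s := by
  obtain ⟨t, ht, rfl⟩ := mem_subsetSums.1 hx
  refine mem_subsetSums.2 ⟨s - t, tsub_le_self, eq_sub_of_add_eq ?_⟩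
  rw [← Multiset.sum_add, tsub_add_cancel_of_le ht]

theorem IsZeroSumFree.neg_notMem_subsetSums_erase (hs : IsZeroSumFree s) (hg : g ∈ s) :
    -g ∉ subsetSums (s.erase g) := by
  intro hneg
  obtain ⟨t, ht, hsum⟩ := mem_subsetSums.1 hneg
  have hle : g ::ₘ t ≤ s := by
    rw [← Multiset.cons_erase hg]
    exact Multiset.cons_le_cons g ht
  exact hs _ hle Multiset.cons_ne_zero (by simp [hsum])

theorem IsZeroSumFree.sum_notMem_subsetSums_erase (hs : IsZeroSumFree s) (hg : g ∈ s) :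
    s.sum ∉ subsetSums (s.erase g) := by
  intro hsum
  apply hs.neg_notMem_subsetSums_erase hg
  simpa [← Multiset.sum_erase hg] using sum_sub_mem_subsetSums hsum

/-- A term `g` of `s` whose removal loses no subset sum other than the total, called a `1`-term by
Savchev and Chen. In a zero-sum free `s` this means that just one subset sum is lost. -/
def IsOneTerm (s : Multiset G) (g : G) : Prop :=
  g ∈ s ∧ subsetSums s ⊆ insert s.sum (subsetSums (s.erase g))

theorem IsZeroSumFree.isOneTerm_of_card_le (hs : IsZeroSumFree s) (hg : g ∈ s)
    (hcard : (subsetSums s).card ≤ (subsetSums (s.erase g)).card + 1) : IsOneTerm s g := by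
  have hsub : insert s.sum (subsetSums (s.erase g)) ⊆ subsetSums s :=
    Finset.insert_subset (sum_mem_subsetSums s) (subsetSums_mono (Multiset.erase_le g s))
  refine ⟨hg, (Finset.eq_of_subset_of_card_le hsub ?_).ge⟩
  rwa [Finset.card_insert_of_notMem (hs.sum_notMem_subsetSums_erase hg)]

theorem IsOneTerm.sub_mem_subsetSums_erase (hg : IsOneTerm s g)
    (hy : y ∈ subsetSums (s.erase g)) (hy0 : y ≠ 0) : y - g ∈ subsetSums (s.erase g) := by
  have hsum : g + (s.erase g).sum = s.sum := Multiset.sum_erase hg.1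
  have hmem : s.sum - y ∈ subsetSums s := by
    rw [← hsum, add_sub_assoc]
    exact add_mem_subsetSums_of_mem_erase hg.1 (sum_sub_mem_subsetSums hy)
  have hne : s.sum - y ≠ s.sum := by simpa using hy0
  have hmem' := sum_sub_mem_subsetSums (Finset.mem_of_mem_insert_of_ne (hg.2 hmem) hne)
  convert hmem' using 1
  rw [← hsum]
  abel

theorem IsOneTerm.eq (hs : IsZeroSumFree s) (hg : IsOneTerm s g) (hh : IsOneTerm s h) : g = h := by
  by_contra hne
  have hle : ∀ x, subsetSums (s.erase x) ⊆ subsetSums s := fun x =>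
    subsetSums_mono (Multiset.erase_le x s)
  have h_mem : h ∈ subsetSums (s.erase g) :=
    mem_subsetSums_of_mem ((Multiset.mem_erase_of_ne (Ne.symm hne)).2 hh.1)
  have hsub_mem_g : h - g ∈ subsetSums (s.erase g) :=
    hg.sub_mem_subsetSums_erase h_mem (hs.ne_zero_of_mem hh.1)
  have hsub_mem_h : h - g ∈ subsetSums (s.erase h) :=
    Finset.mem_of_mem_insert_of_ne (hh.2 (hle g hsub_mem_g))
      (ne_of_mem_of_not_mem hsub_mem_g (hs.sum_notMem_subsetSums_erase hg.1))
  have hneg_mem : -g ∈ subsetSums (s.erase h) := by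
    simpa using hh.sub_mem_subsetSums_erase hsub_mem_h (sub_ne_zero.2 (Ne.symm hne))
  have hneg_eq : -g = s.sum :=
    Finset.eq_of_mem_insert_of_notMem (hg.2 (hle h hneg_mem))
      (hs.neg_notMem_subsetSums_erase hg.1)
  exact hs.sum_notMem_subsetSums_erase hh.1 (hneg_eq ▸ hneg_mem)

end ZeroSumFree

section Behaving

open scoped Pointwise

/-- A multiset of natural numbers whose subset sums fill the interval from `0` to its total. -/
def IsBehaving (m : Multiset ℕ) : Prop :=
  ∀ j ≤ m.sum, j ∈ subsetSums m

variable {m : Multiset ℕ}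

theorem IsBehaving.subsetSums_eq (hm : IsBehaving m) :
    subsetSums m = Finset.range (m.sum + 1) := by
  ext j
  rw [Finset.mem_range_succ_iff]
  refine ⟨fun hj => ?_, hm j⟩
  obtain ⟨t, ht, rfl⟩ := mem_subsetSums.1 hj
  obtain ⟨u, rfl⟩ := Multiset.le_iff_exists_add.1 ht
  simp

theorem isBehaving_zero : IsBehaving 0 := by
  simp [IsBehaving, subsetSums_zero]

theorem IsBehaving.cons (hm : IsBehaving m) {k : ℕ} (hk : k ≤ m.sum + 1) :
    IsBehaving (k ::ₘ m) := by
  intro j hj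
  rw [Multiset.sum_cons] at hj
  rw [subsetSums_cons, hm.subsetSums_eq]
  simp only [Finset.mem_union, Finset.mem_vadd_finset, Finset.mem_range, vadd_eq_add]
  by_cases hjm : j ≤ m.sum
  · exact Or.inl (by omega)
  · exact Or.inr ⟨j - k, by omega, by omega⟩

theorem isBehaving_replicate_one (c : ℕ) : IsBehaving (Multiset.replicate c 1) := by
  induction c with
  | zero => exact isBehaving_zero
  | succ c ih => exact ih.cons (by simp)

theorem IsBehaving.map_mul_add_replicate_one (hm : IsBehaving m) {k c : ℕ} (hk : k ≤ c + 1) :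
    IsBehaving (m.map (· * k) + Multiset.replicate c 1) := by
  intro j hj
  have hj' : j ≤ m.sum * k + c := by simpa [Multiset.sum_map_mul_right] using hj
  have hmap : subsetSums (m.map (· * k)) = (Finset.range (m.sum + 1)).image (· * k) := by
    rw [← hm.subsetSums_eq]
    exact subsetSums_map (AddMonoidHom.mulRight k) m
  rw [subsetSums_add, hmap, (isBehaving_replicate_one c).subsetSums_eq]
  have hdiv : j / k * k + j % k = j := Nat.div_add_mod' j k
  obtain ⟨q, hq, r, hr, rfl⟩ : ∃ q ≤ m.sum, ∃ r ≤ c, q * k + r = j := by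
    by_cases hjk : j / k ≤ m.sum
    · refine ⟨j / k, hjk, j % k, ?_, hdiv⟩
      rcases k.eq_zero_or_pos with rfl | hpos
      · simpa using hj'
      · have := Nat.mod_lt j hpos
        omega
    · have : m.sum * k ≤ j / k * k := Nat.mul_le_mul_right k (by omega)
      exact ⟨m.sum, le_rfl, j - m.sum * k, by omega, by omega⟩
  exact Finset.add_mem_add (Finset.mem_image_of_mem _ (by simpa [Nat.lt_succ_iff] using hq))
    (by simpa [Nat.lt_succ_iff] using hr)

variable {M : Type*} [AddCommMonoid M] {a : M}

theorem IsBehaving.mem_subsetSums_map_nsmul [DecidableEq M] (hm : IsBehaving m) {x : M} :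
    x ∈ subsetSums (m.map (· • a)) ↔ ∃ j ≤ m.sum, j • a = x := by
  have hmap : subsetSums (m.map (· • a)) = (subsetSums m).image (· • a) :=
    subsetSums_map (multiplesHom M a) m
  simp only [hmap, hm.subsetSums_eq, Finset.mem_image, Finset.mem_range_succ_iff]

theorem mem_subsetSums_replicate [DecidableEq M] {c : ℕ} {x : M} :
    x ∈ subsetSums (Multiset.replicate c a) ↔ ∃ i ≤ c, i • a = x := by
  simpa using (isBehaving_replicate_one c).mem_subsetSums_map_nsmul (a := a) (x := x)

theorem IsBehaving.nsmul_ne_zero (hm : IsBehaving m) (hzero : IsZeroSumFree (m.map (· • a)))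
    {j : ℕ} (hj0 : j ≠ 0) (hj : j ≤ m.sum) : j • a ≠ 0 := by
  obtain ⟨t, ht, rfl⟩ := mem_subsetSums.1 (hm j hj)
  have ht0 : t ≠ 0 := by
    rintro rfl
    exact hj0 Multiset.sum_zero
  rw [Multiset.sum_smul]
  exact hzero _ (Multiset.map_le_map ht) (by simpa using ht0)

theorem IsZeroSumFree.pos_of_mem_map_nsmul (hzero : IsZeroSumFree (m.map (· • a))) {k : ℕ}
    (hk : k ∈ m) : 0 < k := by
  rw [Nat.pos_iff_ne_zero]
  rintro rfl
  exact hzero.ne_zero_of_mem (Multiset.mem_map_of_mem _ hk) (zero_nsmul a)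

theorem IsZeroSumFree.card_le_sum_of_map_nsmul (hzero : IsZeroSumFree (m.map (· • a))) :
    m.card ≤ m.sum := by
  simpa using Multiset.card_nsmul_le_sum (a := 1) fun _ => hzero.pos_of_mem_map_nsmul

/-- The multiset `s` consists of the multiples `k • a` of `a`, with coefficients `k` forming a
behaving multiset. -/
def BehavesAlong (a : M) (s : Multiset M) : Prop :=
  ∃ m, IsBehaving m ∧ m.map (· • a) = s

variable {G : Type*} [AddCommGroup G] {a g : G} {s : Multiset G}

theorem IsBehaving.injOn_nsmul (hm : IsBehaving m) (hzero : IsZeroSumFree (m.map (· • a))) :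
    Set.InjOn (· • a) (Set.Iic m.sum) := by
  intro i hi j hj hij
  wlog hle : i ≤ j generalizing i j
  · exact (this hj hi hij.symm (le_of_not_ge hle)).symm
  by_contra hne
  have hsub : (j - i) • a = 0 := by
    rw [sub_nsmul _ hle, ← sub_eq_add_neg, sub_eq_zero]
    exact hij.symm
  exact hm.nsmul_ne_zero hzero (by omega) ((Nat.sub_le j i).trans hj) hsub

theorem BehavesAlong.card_lt_card_subsetSums [DecidableEq G] (hs : BehavesAlong a s)
    (hzero : IsZeroSumFree s) : s.card < (subsetSums s).card := by
  obtain ⟨m, hm, rfl⟩ := hs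
  have hcard : (subsetSums (m.map (· • a))).card = m.sum + 1 := by
    have himage : subsetSums (m.map (· • a)) = (Finset.Iic m.sum).image (· • a) := by
      ext x
      simp [hm.mem_subsetSums_map_nsmul]
    rw [himage, Finset.card_image_of_injOn (by simpa using hm.injOn_nsmul hzero), Nat.card_Iic]
  rw [hcard, Multiset.card_map, Nat.lt_succ_iff]
  exact hzero.card_le_sum_of_map_nsmul

theorem BehavesAlong.cons_or_disjoint [DecidableEq G] (hs : BehavesAlong a s)
    (hzero : IsZeroSumFree (g ::ₘ s)) :
    BehavesAlong a (g ::ₘ s) ∨ Disjoint (subsetSums s) (g +ᵥ subsetSums s) := by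
  rw [or_iff_not_imp_right, Finset.not_disjoint_iff]
  rintro ⟨x, hx, hgx⟩
  obtain ⟨m, hm, rfl⟩ := hs
  obtain ⟨y, hy, rfl⟩ := Finset.mem_vadd_finset.1 hgx
  obtain ⟨i, hi, rfl⟩ := hm.mem_subsetSums_map_nsmul.1 hy
  obtain ⟨j, hj, hji⟩ := hm.mem_subsetSums_map_nsmul.1 hx
  rw [vadd_eq_add] at hji
  rcases le_total j i with hle | hle
  · have hneg : -g = (i - j) • a := by
      rw [sub_nsmul _ hle, hji]
      abel
    have hnot := hzero.neg_notMem_subsetSums_erase (Multiset.mem_cons_self g _)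
    rw [Multiset.erase_cons_head] at hnot
    exact absurd (hm.mem_subsetSums_map_nsmul.2 ⟨i - j, by omega, hneg.symm⟩) hnot
  · have hg : (j - i) • a = g := by
      rw [sub_nsmul _ hle, hji]
      abel
    exact ⟨(j - i) ::ₘ m, hm.cons (by omega), by rw [Multiset.map_cons, hg]⟩

theorem BehavesAlong.cons [DecidableEq G] (hs : BehavesAlong a s)
    (hzero : IsZeroSumFree (g ::ₘ s))
    (hcard : (subsetSums (g ::ₘ s)).card < 2 * (g ::ₘ s).card) : BehavesAlong a (g ::ₘ s) := by
  refine (hs.cons_or_disjoint hzero).resolve_right fun hdisj => ?_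
  rw [subsetSums_cons, Finset.card_union_of_disjoint hdisj, Finset.card_vadd_finset,
    Multiset.card_cons] at hcard
  have := hs.card_lt_card_subsetSums (hzero.mono (Multiset.le_cons_self s g))
  omega

end Behaving

section OneTerm

open scoped Pointwise

variable {G : Type*} [AddCommGroup G] [DecidableEq G] {a g : G} {s : Multiset G}

theorem IsBehaving.exists_eq_nsmul_of_isOneTerm {m : Multiset ℕ} {c : ℕ} (hm : IsBehaving m)
    (hm0 : m ≠ 0) (hzero : IsZeroSumFree (m.map (· • a) + Multiset.replicate (c + 1) g))
    (hone : IsOneTerm (m.map (· • a) + Multiset.replicate (c + 1) g) g) :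
    ∃ k ≤ c + 1, k • g = a := by
  have hmem {x : G} : x ∈ subsetSums (m.map (· • a) + Multiset.replicate c g) ↔
      ∃ j ≤ m.sum, ∃ i ≤ c, j • a + i • g = x := by
    simp [subsetSums_add, Finset.mem_add, hm.mem_subsetSums_map_nsmul, mem_subsetSums_replicate]
  have hzero' := hzero.mono (Multiset.le_add_right _ _)
  have hsum : 1 ≤ m.sum :=
    (Multiset.card_pos.2 hm0).trans_le hzero'.card_le_sum_of_map_nsmul
  have ha0 : a ≠ 0 := by simpa using hm.nsmul_ne_zero hzero' one_ne_zero hsum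
  have ha : a ∈ subsetSums (m.map (· • a) + Multiset.replicate c g) :=
    hmem.2 ⟨1, hsum, 0, c.zero_le, by simp⟩
  have herase : (m.map (· • a) + Multiset.replicate (c + 1) g).erase g =
      m.map (· • a) + Multiset.replicate c g := by
    rw [Multiset.replicate_succ, Multiset.add_cons, Multiset.erase_cons_head]
  have hneg := hzero.neg_notMem_subsetSums_erase hone.1
  have hsub := hone.sub_mem_subsetSums_erase (y := a)
  rw [herase] at hneg hsub
  obtain ⟨j, hj, i, hi, hji⟩ := hmem.1 (hsub ha ha0)
  rcases j with _ | j
  · have hi_eq : i • g = a - g := by simpa using hji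
    exact ⟨i + 1, by omega, by rw [succ_nsmul, hi_eq, sub_add_cancel]⟩
  · refine absurd (hmem.2 ⟨j, by omega, i, hi, ?_⟩) hneg
    apply add_right_cancel (b := a)
    rw [neg_add_eq_sub, ← hji, succ_nsmul]
    abel

theorem BehavesAlong.add_replicate_of_isOneTerm {c : ℕ} (hs : BehavesAlong a s)
    (hzero : IsZeroSumFree (s + Multiset.replicate (c + 1) g))
    (hone : IsOneTerm (s + Multiset.replicate (c + 1) g) g) :
    BehavesAlong g (s + Multiset.replicate c g) := by
  obtain ⟨m, hm, rfl⟩ := hs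
  rcases eq_or_ne m 0 with rfl | hm0
  · exact ⟨Multiset.replicate c 1, isBehaving_replicate_one c, by simp⟩
  obtain ⟨k, hk, rfl⟩ := hm.exists_eq_nsmul_of_isOneTerm hm0 hzero hone
  exact ⟨_, hm.map_mul_add_replicate_one hk, by simp [mul_nsmul']⟩

end OneTerm

section Extension

variable {G : Type*} [AddCommGroup G]

theorem BehavesAlong.exists_lt_of_forall_isOneTerm [DecidableEq G] {a : G} {s t : Multiset G}
    (hs : BehavesAlong a s) (ht : 1 < t.card) (hzero : IsZeroSumFree (s + t))
    (hone : ∀ h ∈ t, IsOneTerm (s + t) h) :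
    ∃ u, s < u ∧ u ≤ s + t ∧ ∃ b, BehavesAlong b u := by
  obtain ⟨g, hg⟩ := Multiset.card_pos_iff_exists_mem.1 (zero_lt_one.trans ht)
  obtain ⟨c, hc⟩ := Nat.exists_eq_add_of_lt ht
  obtain rfl : t = Multiset.replicate (c + 1 + 1) g :=
    Multiset.eq_replicate.2 ⟨by omega, fun h hh => (hone h hh).eq hzero (hone g hg)⟩
  refine ⟨s + Multiset.replicate (c + 1) g, ?_, ?_, g,
    hs.add_replicate_of_isOneTerm hzero (hone g hg)⟩
  · rw [Multiset.replicate_succ, Multiset.add_cons]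
    exact (Multiset.le_add_right s _).trans_lt (Multiset.lt_cons_self _ g)
  · gcongr
    omega

theorem BehavesAlong.exists_lt_of_card_subsetSums_lt [DecidableEq G] {a : G} {s t : Multiset G}
    (hs : BehavesAlong a s) (ht0 : t ≠ 0) (hzero : IsZeroSumFree (s + t))
    (hcard : (subsetSums (s + t)).card < 2 * (s + t).card) :
    ∃ u, s < u ∧ u ≤ s + t ∧ ∃ b, BehavesAlong b u := by
  induction t using Multiset.strongInductionOn with | ih t ih =>
  by_cases hsmaller : ∃ h ∈ t, t.erase h ≠ 0 ∧
      (subsetSums (s + t.erase h)).card < 2 * (s + t.erase h).card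
  · obtain ⟨h, hh, herase0, hcard'⟩ := hsmaller
    have hle : s + t.erase h ≤ s + t := add_le_add_right (Multiset.erase_le h t) s
    obtain ⟨u, hsu, hut, hu⟩ :=
      ih _ (Multiset.erase_lt.2 hh) herase0 (hzero.mono hle) hcard'
    exact ⟨u, hsu, hut.trans hle, hu⟩
  push Not at hsmaller
  rcases Nat.lt_or_ge 1 t.card with hlarge | hsingle
  · have hone : ∀ h ∈ t, IsOneTerm (s + t) h := by
      intro h hh
      apply hzero.isOneTerm_of_card_le (Multiset.mem_add.2 (Or.inr hh))
      have hcard_erase := Multiset.card_erase_add_one hh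
      have := hsmaller h hh (Multiset.card_pos.1 (by omega))
      rw [Multiset.erase_add_right_pos s hh]
      rw [Multiset.card_add] at this hcard
      omega
    exact hs.exists_lt_of_forall_isOneTerm hlarge hzero hone
  · obtain ⟨x, rfl⟩ := Multiset.card_eq_one.1 (le_antisymm hsingle (Multiset.card_pos.2 ht0))
    rw [Multiset.add_comm, Multiset.singleton_add] at hzero hcard ⊢
    exact ⟨x ::ₘ s, Multiset.lt_cons_self s x, le_rfl, a, hs.cons hzero hcard⟩

theorem IsZeroSumFree.exists_behavesAlong [Finite G] {s : Multiset G} (hs : IsZeroSumFree s)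
    (hcard : Nat.card G < 2 * s.card) : ∃ a, BehavesAlong a s := by
  classical
  have := Fintype.ofFinite G
  have hfin : {t | t ≤ s ∧ ∃ a : G, BehavesAlong a t}.Finite :=
    (Set.finite_Iic s).subset fun _ ht => ht.1
  obtain ⟨t, -, ⟨hts, a, ha⟩, hmax⟩ :=
    hfin.exists_le_maximal (a := 0) ⟨Multiset.zero_le s, 0, 0, isBehaving_zero, rfl⟩
  have hadd : t + (s - t) = s := add_tsub_cancel_of_le hts
  suffices s - t = 0 by
    rw [this, add_zero] at hadd
    exact ⟨a, hadd ▸ ha⟩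
  by_contra hne
  have hsums : (subsetSums s).card < 2 * s.card :=
    (Finset.card_le_univ _).trans_lt (by rwa [← Nat.card_eq_fintype_card])
  obtain ⟨u, htu, hus, hu⟩ := ha.exists_lt_of_card_subsetSums_lt hne (by rwa [hadd]) (by rwa [hadd])
  exact htu.not_ge (hmax ⟨hadd ▸ hus, hu⟩ htu.le)

theorem IsZeroSumFree.exists_eq_map_nsmul_sum_lt_card [Finite G] {s : Multiset G}
    (hs : IsZeroSumFree s) (hcard : Nat.card G < 2 * s.card) :
    ∃ (a : G) (m : Multiset ℕ), addOrderOf a = Nat.card G ∧ (∀ k ∈ m, 0 < k) ∧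
      m.sum < Nat.card G ∧ m.map (· • a) = s := by
  obtain ⟨a, m, hm, rfl⟩ := hs.exists_behavesAlong hcard
  have hsum : m.sum < addOrderOf a := by
    by_contra! hle
    exact hm.nsmul_ne_zero hs (addOrderOf_pos a).ne' hle (addOrderOf_nsmul_eq_zero a)
  have hle := hs.card_le_sum_of_map_nsmul
  rw [Multiset.card_map] at hcard
  have horder : Nat.card G = addOrderOf a :=
    Nat.eq_of_dvd_of_lt_two_mul Nat.card_pos.ne' (addOrderOf_dvd_natCard a) (by omega)
  exact ⟨a, m, horder.symm, fun _ => hs.pos_of_mem_map_nsmul, horder ▸ hsum, rfl⟩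

end Extension

theorem ZeroFree.isZeroSumFree_coe {G : Type*} [AddCommGroup G] {l : List G} (hl : ZeroFree l) :
    IsZeroSumFree (l : Multiset G) := by
  intro t ht ht0
  induction t using Quotient.inductionOn with | _ t =>
  obtain ⟨u, hperm, hsub⟩ := Multiset.coe_le.1 ht
  have hu0 : u ≠ [] := by
    rintro rfl
    exact ht0 (Multiset.coe_eq_coe.2 hperm.symm)
  have := hl u hsub hu0
  rwa [hperm.sum_eq] at this

theorem exists_isCoprime_mul_eq_one_of_addOrderOf_eq {n : ℕ} [NeZero n] {a : ZMod n}
    (ha : addOrderOf a = n) : ∃ g : ℤ, IsCoprime g n ∧ (g : ZMod n) * a = 1 := by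
  have htop : AddSubgroup.zmultiples a = ⊤ :=
    AddSubgroup.eq_top_of_card_eq _ (by rw [Nat.card_zmultiples, ha, Nat.card_zmod])
  obtain ⟨g, hg⟩ := AddSubgroup.mem_zmultiples_iff.1 (htop ▸ AddSubgroup.mem_top (1 : ZMod n))
  rw [zsmul_eq_mul] at hg
  exact ⟨g, ((ZMod.coe_int_isUnit_iff_isCoprime g n).1 (IsUnit.of_mul_eq_one a hg)).symm, hg⟩

theorem lpr_natCast {n k : ℕ} (hk : 0 < k) (hkn : k ≤ n) : lpr n (k : ZMod n) = k := by
  rcases hkn.eq_or_lt with rfl | hlt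
  · simp [lpr]
  · have hne : (k : ZMod n) ≠ 0 := by
      rw [Ne, ZMod.natCast_eq_zero_iff]
      exact Nat.not_dvd_of_pos_of_lt hk hlt
    rw [lpr, if_neg hne, ZMod.val_cast_of_lt hlt]

theorem stmt10 (n : ℕ) (hn : 1 < n) (α : List (ZMod n))
    (hlen : n < 2 * α.length) (hzf : ZeroFree α) :
    ∃ g : ℤ, IsCoprime g (n : ℤ) ∧
      (α.map (fun a => lpr n ((g : ZMod n) * a))).sum < n := by
  have : NeZero n := ⟨by omega⟩
  obtain ⟨a, m, horder, hpos, hsum, hα⟩ :=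
    hzf.isZeroSumFree_coe.exists_eq_map_nsmul_sum_lt_card (by simpa using hlen)
  rw [Nat.card_zmod] at horder hsum
  obtain ⟨g, hcoprime, hga⟩ := exists_isCoprime_mul_eq_one_of_addOrderOf_eq horder
  have hlpr : ∀ k ∈ m, lpr n (g * (k • a)) = k := by
    intro k hk
    rw [mul_smul_comm, hga, nsmul_one]
    exact lpr_natCast (hpos k hk) ((Multiset.le_sum_of_mem hk).trans hsum.le)
  refine ⟨g, hcoprime, ?_⟩
  calc
    (α.map fun b => lpr n (g * b)).sum = (m.map fun k => lpr n (g * (k • a))).sum := by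
      rw [← Multiset.sum_coe, ← Multiset.map_coe, ← hα, Multiset.map_map]
      simp only [Function.comp_apply]
    _ = m.sum := by rw [Multiset.map_congr rfl hlpr, Multiset.map_id']
    _ < n := hsum
end

section
/- Let n and ℓ be integers with n/2 < ℓ < n. Every zero-free sequence of length ℓ in Z/nZ contains a term of multiplicity at least 2ℓ − n + 1. -/
/-- The sumset of a list: all sums of nonempty sublists. -/
def sumset {G : Type*} [AddCommGroup G] (l : List G) : Set G :=
  {x | ∃ t : List G, t.Sublist l ∧ t ≠ [] ∧ t.sum = x}

/-!
Write `Σ(s)` for the set of all subsums of a zero-free sequence `s`, the empty one included. For a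
term `x` of `s`, both `Σ(s - x)` and its translate by `x` lie in `Σ(s)`; the former misses the total
sum of `s` and the latter misses `0`. Hence `|Σ(s)| ≥ |Σ(s - x)| + 1`, and in case of equality
`Σ(s - x)` is all of `Σ(s)` but the total sum, and `x + Σ(s - x)` is all of `Σ(s)` but `0`.

Equality cannot hold for two distinct terms `x` and `y`: it would put `x - y` in `Σ(s - y)`, then
`-y` in `Σ(s - x)`, then `-y` in `Σ(s - y)`, producing a zero sum through `y`. So as long as two
distinct terms remain, one of them can be deleted at the cost of at least two subsums. Deleting down
to a constant sequence gives `|Σ(s)| ≥ 2 |s| - h + 1`, where `h` is the largest multiplicity, in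
every abelian group.
-/

open Finset

section Subsums

variable {M : Type*} [AddCommMonoid M] [DecidableEq M] {s t : Multiset M} {a x : M}

/-- The set of sums of all submultisets of `s`. Unlike `sumset`, it includes the empty sum `0`. -/
def subsums (s : Multiset M) : Finset M :=
  (s.powerset.map Multiset.sum).toFinset

theorem mem_subsums : a ∈ subsums s ↔ ∃ t ≤ s, t.sum = a := by
  simp [subsums]

theorem zero_mem_subsums (s : Multiset M) : 0 ∈ subsums s :=
  mem_subsums.2 ⟨0, zero_le, Multiset.sum_zero⟩

theorem sum_mem_subsums (s : Multiset M) : s.sum ∈ subsums s :=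
  mem_subsums.2 ⟨s, le_rfl, rfl⟩

theorem mem_subsums_of_mem (hx : x ∈ s) : x ∈ subsums s :=
  mem_subsums.2 ⟨{x}, Multiset.singleton_le.2 hx, Multiset.sum_singleton x⟩

theorem subsums_mono (hst : s ≤ t) : subsums s ⊆ subsums t := fun _ ha =>
  let ⟨u, hus, hu⟩ := mem_subsums.1 ha
  mem_subsums.2 ⟨u, hus.trans hst, hu⟩

theorem subsums_erase_subset (s : Multiset M) (x : M) : subsums (s.erase x) ⊆ subsums s :=
  subsums_mono (Multiset.erase_le x s)

theorem add_mem_subsums_of_mem_subsums_erase (hx : x ∈ s) (ha : a ∈ subsums (s.erase x)) :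
    x + a ∈ subsums s := by
  obtain ⟨t, hts, rfl⟩ := mem_subsums.1 ha
  have hle : x ::ₘ t ≤ s := Multiset.cons_erase hx ▸ Multiset.cons_le_cons x hts
  exact mem_subsums.2 ⟨x ::ₘ t, hle, Multiset.sum_cons x t⟩

end Subsums

/-- The multiset counterpart of `ZeroFree`: the empty submultiset is the only one with sum `0`. -/
def IsZeroFree {M : Type*} [AddCommMonoid M] (s : Multiset M) : Prop :=
  ∀ t ≤ s, t.sum = 0 → t = 0

namespace IsZeroFree

theorem mono {M : Type*} [AddCommMonoid M] {s t : Multiset M} (ht : IsZeroFree t) (hst : s ≤ t) :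
    IsZeroFree s :=
  fun u hus => ht u (hus.trans hst)

theorem ne_zero_of_mem {M : Type*} [AddCommMonoid M] {s : Multiset M} {x : M} (hs : IsZeroFree s)
    (hx : x ∈ s) : x ≠ 0 := fun hx0 =>
  Multiset.singleton_ne_zero x
    (hs {x} (Multiset.singleton_le.2 hx) ((Multiset.sum_singleton x).trans hx0))

variable {G : Type*} [AddCommGroup G] [DecidableEq G] {s : Multiset G} {a x y : G}

theorem neg_notMem_subsums_erase (hs : IsZeroFree s) (hx : x ∈ s) :
    -x ∉ subsums (s.erase x) := by
  intro hmem
  obtain ⟨t, hts, hsum⟩ := mem_subsums.1 hmem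
  have hle : x ::ₘ t ≤ s := Multiset.cons_erase hx ▸ Multiset.cons_le_cons x hts
  have hzero : (x ::ₘ t).sum = 0 := by rw [Multiset.sum_cons, hsum, add_neg_cancel]
  exact Multiset.cons_ne_zero (hs _ hle hzero)

theorem sum_notMem_subsums_erase (hs : IsZeroFree s) (hx : x ∈ s) :
    s.sum ∉ subsums (s.erase x) := by
  intro hmem
  obtain ⟨t, hts, hsum⟩ := mem_subsums.1 hmem
  obtain ⟨u, hu⟩ := Multiset.le_iff_exists_add.1 hts
  have hs_eq : x ::ₘ u + t = s := by
    rw [Multiset.cons_add, add_comm u t, ← hu, Multiset.cons_erase hx]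
  have hzero : (x ::ₘ u).sum = 0 := by
    rw [← hs_eq, Multiset.sum_add] at hsum
    exact right_eq_add.1 hsum
  exact Multiset.cons_ne_zero (hs _ (hs_eq ▸ Multiset.le_add_right _ t) hzero)

theorem subsums_erase_subset_erase_sum (hs : IsZeroFree s) (hx : x ∈ s) :
    subsums (s.erase x) ⊆ (subsums s).erase s.sum :=
  subset_erase.2 ⟨subsums_erase_subset s x, hs.sum_notMem_subsums_erase hx⟩

theorem image_add_subsums_erase_subset_erase_zero (hs : IsZeroFree s) (hx : x ∈ s) :
    (subsums (s.erase x)).image (x + ·) ⊆ (subsums s).erase 0 := by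
  intro b hb
  obtain ⟨a, ha, rfl⟩ := mem_image.1 hb
  refine mem_erase.2 ⟨fun hzero => ?_, add_mem_subsums_of_mem_subsums_erase hx ha⟩
  exact hs.neg_notMem_subsums_erase hx (neg_eq_of_add_eq_zero_right hzero ▸ ha)

theorem card_subsums_erase_lt (hs : IsZeroFree s) (hx : x ∈ s) :
    #(subsums (s.erase x)) < #(subsums s) :=
  (card_le_card (hs.subsums_erase_subset_erase_sum hx)).trans_lt
    (card_erase_lt_of_mem (sum_mem_subsums s))

theorem card_lt_card_subsums (hs : IsZeroFree s) : s.card < #(subsums s) := by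
  induction s using Multiset.induction_on with
  | empty => exact card_pos.2 ⟨0, zero_mem_subsums 0⟩
  | cons x s ih =>
    have hlt := hs.card_subsums_erase_lt (Multiset.mem_cons_self x s)
    rw [Multiset.erase_cons_head] at hlt
    have hcard := ih (hs.mono (Multiset.le_cons_self s x))
    rw [Multiset.card_cons]
    lia

theorem subsums_erase_eq_erase_sum (hs : IsZeroFree s) (hx : x ∈ s)
    (hcard : #(subsums s) ≤ #(subsums (s.erase x)) + 1) :
    subsums (s.erase x) = (subsums s).erase s.sum := by
  refine eq_of_subset_of_card_le (hs.subsums_erase_subset_erase_sum hx) ?_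
  rw [card_erase_of_mem (sum_mem_subsums s)]
  lia

theorem image_add_subsums_erase_eq_erase_zero (hs : IsZeroFree s) (hx : x ∈ s)
    (hcard : #(subsums s) ≤ #(subsums (s.erase x)) + 1) :
    (subsums (s.erase x)).image (x + ·) = (subsums s).erase 0 := by
  refine eq_of_subset_of_card_le (hs.image_add_subsums_erase_subset_erase_zero hx) ?_
  rw [card_erase_of_mem (zero_mem_subsums s), card_image_of_injective _ (add_right_injective x)]
  lia

theorem sub_mem_subsums_erase (hs : IsZeroFree s) (hx : x ∈ s)
    (hcard : #(subsums s) ≤ #(subsums (s.erase x)) + 1) (ha : a ∈ subsums s) (ha0 : a ≠ 0) :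
    a - x ∈ subsums (s.erase x) := by
  have hmem : a ∈ (subsums (s.erase x)).image (x + ·) :=
    hs.image_add_subsums_erase_eq_erase_zero hx hcard ▸ mem_erase.2 ⟨ha0, ha⟩
  obtain ⟨b, hb, rfl⟩ := mem_image.1 hmem
  rwa [add_sub_cancel_left]

theorem card_subsums_erase_add_two_le_or (hs : IsZeroFree s) (hx : x ∈ s) (hy : y ∈ s)
    (hxy : x ≠ y) :
    #(subsums (s.erase x)) + 2 ≤ #(subsums s) ∨ #(subsums (s.erase y)) + 2 ≤ #(subsums s) := by
  by_contra! hcon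
  have hcardx : #(subsums s) ≤ #(subsums (s.erase x)) + 1 := Nat.le_of_lt_succ hcon.1
  have hcardy : #(subsums s) ≤ #(subsums (s.erase y)) + 1 := Nat.le_of_lt_succ hcon.2
  have hsub : x - y ∈ subsums s := subsums_erase_subset s y
    (hs.sub_mem_subsums_erase hy hcardy (mem_subsums_of_mem hx) (hs.ne_zero_of_mem hx))
  have hneg : -y ∈ subsums (s.erase x) := by
    simpa only [sub_sub_cancel_left] using
      hs.sub_mem_subsums_erase hx hcardx hsub (sub_ne_zero.2 hxy)
  rw [hs.subsums_erase_eq_erase_sum hx hcardx, ← hs.subsums_erase_eq_erase_sum hy hcardy] at hneg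
  exact hs.neg_notMem_subsums_erase hy hneg

theorem exists_two_mul_card_lt_card_subsums_add_count (hs : IsZeroFree s) (hs0 : s ≠ 0) :
    ∃ a ∈ s, 2 * s.card < #(subsums s) + s.count a := by
  induction s using Multiset.strongInductionOn with
  | _ s ih =>
    obtain ⟨x, hx⟩ := Multiset.exists_mem_of_ne_zero hs0
    by_cases hconst : ∀ y ∈ s, x = y
    · have hcount : s.count x = s.card := Multiset.count_eq_card.2 hconst
      have hcard := hs.card_lt_card_subsums
      exact ⟨x, hx, by lia⟩
    push Not at hconst
    obtain ⟨y, hy, hxy⟩ := hconst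
    obtain ⟨z, w, hz, hw, hwz, hdrop⟩ : ∃ z w, z ∈ s ∧ w ∈ s ∧ w ≠ z ∧
        #(subsums (s.erase z)) + 2 ≤ #(subsums s) := by
      rcases hs.card_subsums_erase_add_two_le_or hx hy hxy with hdrop | hdrop
      · exact ⟨x, y, hx, hy, hxy.symm, hdrop⟩
      · exact ⟨y, x, hy, hx, hxy, hdrop⟩
    have hw_erase : w ∈ s.erase z := (Multiset.mem_erase_of_ne hwz).2 hw
    obtain ⟨a, ha, hlt⟩ := ih (s.erase z) (Multiset.erase_lt.2 hz)
      (hs.mono (Multiset.erase_le z s)) (fun h0 => Multiset.notMem_zero w (h0 ▸ hw_erase))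
    have hcard := Multiset.card_erase_add_one hz
    have hcount := Multiset.count_le_of_le a (Multiset.erase_le z s)
    exact ⟨a, Multiset.mem_of_mem_erase ha, by lia⟩

end IsZeroFree

section Lists

variable {G : Type*} [AddCommGroup G] {l : List G}

theorem ZeroFree.isZeroFree_coe (hl : ZeroFree l) : IsZeroFree (l : Multiset G) := by
  intro t hts hsum
  induction t using Quotient.inductionOn with
  | _ t =>
    obtain ⟨u, hperm, hsub⟩ := Multiset.coe_le.1 hts
    by_contra hne
    refine hl u hsub ?_ (hperm.sum_eq.trans hsum)
    rintro rfl
    exact hne (congrArg _ hperm.nil_eq.symm)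

theorem ZeroFree.zero_notMem_sumset (hl : ZeroFree l) : 0 ∉ sumset l :=
  fun ⟨t, hsub, hne, hsum⟩ => hl t hsub hne hsum

theorem coe_subsums_coe [DecidableEq G] (l : List G) :
    (subsums (l : Multiset G) : Set G) = insert 0 (sumset l) := by
  ext a
  rw [mem_coe, mem_subsums]
  constructor
  · rintro ⟨t, hts, rfl⟩
    induction t using Quotient.inductionOn with
    | _ t =>
      obtain ⟨u, hperm, hsub⟩ := Multiset.coe_le.1 hts
      have hsum : u.sum = (t : Multiset G).sum := hperm.sum_eq
      rcases eq_or_ne u [] with rfl | hne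
      · exact Or.inl hsum.symm
      · exact Or.inr ⟨u, hsub, hne, hsum⟩
  · rintro (rfl | ⟨t, hsub, -, rfl⟩)
    · exact ⟨0, zero_le, Multiset.sum_zero⟩
    · exact ⟨t, hsub.subperm, Multiset.sum_coe t⟩

theorem ZeroFree.card_subsums_coe [DecidableEq G] (hl : ZeroFree l) :
    #(subsums (l : Multiset G)) = (sumset l).ncard + 1 := by
  have hfin : (sumset l).Finite := (subsums (l : Multiset G)).finite_toSet.subset
    (coe_subsums_coe l ▸ Set.subset_insert 0 _)
  rw [← Set.ncard_coe_finset, coe_subsums_coe,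
    Set.ncard_insert_of_notMem hl.zero_notMem_sumset hfin]

theorem ZeroFree.ncard_sumset_lt_card [Finite G] (hl : ZeroFree l) :
    (sumset l).ncard < Nat.card G :=
  Set.ncard_lt_card fun huniv => hl.zero_notMem_sumset (huniv ▸ Set.mem_univ 0)

end Lists

theorem stmt14_general {G : Type*} [AddCommGroup G] [DecidableEq G] (α : List G) (hα : α ≠ [])
    (hzf : ZeroFree α) : ∃ a ∈ α, 2 * α.length ≤ (sumset α).ncard + α.count a := by
  obtain ⟨a, ha, hlt⟩ := hzf.isZeroFree_coe.exists_two_mul_card_lt_card_subsums_add_count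
    (mt (Multiset.coe_eq_zero α).1 hα)
  rw [hzf.card_subsums_coe, Multiset.coe_card, Multiset.coe_count] at hlt
  exact ⟨a, ha, by lia⟩

theorem stmt14 (n ℓ : ℕ) (h1 : n < 2 * ℓ) (h2 : ℓ < n)
    (α : List (ZMod n)) (hlen : α.length = ℓ) (hzf : ZeroFree α) :
    ∃ a ∈ α, 2 * ℓ - n + 1 ≤ α.count a := by
  have : NeZero n := ⟨Nat.ne_zero_of_lt h2⟩
  have hα : α ≠ [] := List.ne_nil_of_length_pos (by lia)
  obtain ⟨a, ha, hle⟩ := stmt14_general α hα hzf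
  have hlt : (sumset α).ncard < n := hzf.ncard_sumset_lt_card.trans_eq (Nat.card_zmod n)
  exact ⟨a, ha, by lia⟩
end
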